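/- Let C be a Weyl candidate on Minkowski space V with electric part E = E(C) and magnetic part B = B(C) with respect to a unit timelike vector n. Then the cubic Weyl scalars split as: (1/16) C^{μν}_{ λρ} C^{σπ}_{ μν} C^{λρ}_{ σπ} = E_{νλ}( 3 B_{μ}^{ λ} B^{μν} − E_{μ}^{ λ} E^{μν} ) and (1/16) C^{μν}_{ λρ} C^{σπ}_{ μν} (C*)^{λρ}_{ σπ} = B^{μν}( B_{μ}^{ λ} B_{νλ} − 3 E_{μ}^{ λ} E_{νλ} ), where all indices are raised with η. -/

import Mathlib

noncomputable section

/-- Minkowski space `V = ℝ⁴`. -/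
abbrev V4 : Type := Fin 4 → ℝ

/-- The Minkowski bilinear form of signature `(-,+,+,+)`. -/
def η (x y : V4) : ℝ := -(x 0 * y 0) + x 1 * y 1 + x 2 * y 2 + x 3 * y 3

/-- The standard basis of `V4`. -/
def e4 (a : Fin 4) : V4 := Pi.single a 1

/-- Components of the Minkowski metric `diag(-1,1,1,1)` (its own inverse). -/
def ηm (a b : Fin 4) : ℝ := if a = b then (if a = (0 : Fin 4) then -1 else 1) else 0

/-- A 4-linear form on `V4`, given by its components in the standard basis. -/
abbrev T4 : Type := Fin 4 → Fin 4 → Fin 4 → Fin 4 → ℝ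

/-- A bilinear form on `V4`, given by its components in the standard basis. -/
abbrev T2 : Type := Fin 4 → Fin 4 → ℝ

/-- Evaluation of a 4-linear form (given by components) on vectors. -/
def eval4 (W : T4) (x y z w : V4) : ℝ :=
  ∑ a : Fin 4, ∑ b : Fin 4, ∑ c : Fin 4, ∑ d : Fin 4, W a b c d * x a * y b * z c * w d

/-- The alternating volume 4-form with `vol(e₀,e₁,e₂,e₃) = 1`. -/
def volv (x y z w : V4) : ℝ := Matrix.det (Matrix.of ![x, y, z, w])

/-- Components `η_{αβγδ}` of the volume form. -/
def volc (a b c d : Fin 4) : ℝ := volv (e4 a) (e4 b) (e4 c) (e4 d)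

/-- Left dual `(*W)_{μνλρ} = ½ η_{μν}{}^{αβ} W_{αβλρ}`. -/
def leftDual (W : T4) : T4 := fun μ ν lam ρ =>
  (1/2) * ∑ γ : Fin 4, ∑ δ : Fin 4, ∑ a : Fin 4, ∑ b : Fin 4,
    volc μ ν γ δ * ηm γ a * ηm δ b * W a b lam ρ

/-- Right dual `(W*)_{μνλρ} = ½ W_{μν}{}^{αβ} η_{αβλρ}`. -/
def rightDual (W : T4) : T4 := fun μ ν lam ρ =>
  (1/2) * ∑ γ : Fin 4, ∑ δ : Fin 4, ∑ a : Fin 4, ∑ b : Fin 4,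
    W μ ν a b * ηm a γ * ηm b δ * volc γ δ lam ρ

/-- A Weyl candidate: pair antisymmetries, pair exchange, first Bianchi, trace-free. -/
def IsWeyl (W : T4) : Prop :=
  (∀ x y z w : V4, eval4 W x y z w = - eval4 W y x z w) ∧
  (∀ x y z w : V4, eval4 W x y z w = - eval4 W x y w z) ∧
  (∀ x y z w : V4, eval4 W x y z w = eval4 W z w x y) ∧
  (∀ x y z w : V4, eval4 W x y z w + eval4 W x z w y + eval4 W x w y z = 0) ∧
  (∀ x y : V4, ∑ a : Fin 4, ∑ b : Fin 4, ηm a b * eval4 W (e4 a) x (e4 b) y = 0)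

/-- Electric part `E(W)_{ab} = W(e_a, n, e_b, n)`. -/
def Epart (W : T4) (n : V4) : T2 := fun a b => eval4 W (e4 a) n (e4 b) n

/-- Magnetic part `B(W)_{ab} = (W*)(e_a, n, e_b, n)`. -/
def Bpart (W : T4) (n : V4) : T2 := fun a b => eval4 (rightDual W) (e4 a) n (e4 b) n

/-- Raise both indices of a bilinear form's components. -/
def up2 (S : T2) : T2 := fun a b => ∑ c : Fin 4, ∑ d : Fin 4, ηm a c * ηm b d * S c d

/-- Full contraction `S_{ab} T^{ab}`. -/
def contr2 (S T : T2) : ℝ := ∑ a : Fin 4, ∑ b : Fin 4, S a b * up2 T a b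

/-- Raise the first two indices with `η`: `W^{μν}{}_{λρ}`. -/
def upFirst2 (W : T4) : T4 := fun a b c d =>
  ∑ a' : Fin 4, ∑ b' : Fin 4, ηm a a' * ηm b b' * W a' b' c d

open Matrix
open Complex (I ofRealHom)
open scoped Kronecker

/-!
For a Weyl tensor the two Hodge duals agree, so `Z = C + i C*` is self-dual in both of its index
pairs and has the form `Z = M Q Mᵀ`, where the columns of `M` span the three-dimensional space of
complex self-dual bivectors and `Q` is a symmetric `3 × 3` matrix. Self-dual and anti-self-dual
bivectors are orthogonal, hence the cubic scalar `C C Z`, which is `C C C + i C C C*`, is a quarter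
of `Z Z Z`. Contraction with `n` is, up to the factor `-η n n`, an isometry from the self-dual
bivectors into `ℂ⁴`, and it carries `Z` to `E + i B`. So `C C Z` and the cube of `E + i B` are both
multiples of `tr Q³`, and the two identities are the real and imaginary parts of their
proportionality.
-/

section Trace

variable {ι κ : Type*} [Fintype ι] [Fintype κ]

lemma trace_mul_mul_pow_succ [DecidableEq ι] [DecidableEq κ] {R : Type*} [CommRing R]
    {A : Matrix ι κ R} {N : Matrix κ ι R} {c : R}
    (h : N * A = c • 1) (Q : Matrix κ κ R) (j : ℕ) :
    ((A * Q * N) ^ (j + 1)).trace = c ^ (j + 1) * (Q ^ (j + 1)).trace := by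
  have hpow : (A * Q * N) ^ (j + 1) = c ^ j • (A * Q ^ (j + 1) * N) := by
    induction j with
    | zero => simp
    | succ j ih =>
      calc (A * Q * N) ^ (j + 1 + 1) = c ^ j • (A * Q ^ (j + 1) * (N * A) * Q * N) := by
            rw [pow_succ, ih, smul_mul]
            simp only [Matrix.mul_assoc]
        _ = c ^ (j + 1) • (A * Q ^ (j + 1 + 1) * N) := by
            rw [h, Matrix.mul_smul, Matrix.mul_one, smul_mul, smul_mul, smul_smul, ← pow_succ,
              Matrix.mul_assoc A, ← pow_succ]
  rw [hpow, trace_smul, smul_eq_mul, trace_mul_comm, ← Matrix.mul_assoc, h, smul_mul,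
    Matrix.one_mul, trace_smul, smul_eq_mul, ← mul_assoc, ← pow_succ]

lemma trace_mul_mul_eq_sum {R : Type*} [NonUnitalSemiring R] (X Y Z : Matrix ι ι R) :
    (X * Y * Z).trace = ∑ i, ∑ j, ∑ k, X i j * Y j k * Z k i := by
  simp only [trace, diag_apply, mul_apply, Finset.mul_sum, mul_assoc]

lemma trace_map_ofRealHom (X : Matrix ι ι ℝ) : (X.map ofRealHom).trace = (X.trace : ℂ) :=
  (AddMonoidHom.map_trace ofRealHom X).symm

lemma trace_add_I_smul_pow_three [DecidableEq ι] (X Y : Matrix ι ι ℝ) :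
    ((X.map ofRealHom + I • Y.map ofRealHom) ^ 3).trace
      = ((X * X * X).trace - 3 * (X * Y * Y).trace : ℝ)
        + I * (3 * (Y * X * X).trace - (Y * Y * Y).trace : ℝ) := by
  have hYXY : (Y * X * Y).trace = (X * Y * Y).trace := by
    rw [Matrix.mul_assoc, trace_mul_comm]
  have hYYX : (Y * Y * X).trace = (X * Y * Y).trace := by
    rw [trace_mul_comm, Matrix.mul_assoc]
  have hXYX : (X * Y * X).trace = (Y * X * X).trace := by
    rw [Matrix.mul_assoc, trace_mul_comm]
  have hXXY : (X * X * Y).trace = (Y * X * X).trace := by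
    rw [trace_mul_comm, Matrix.mul_assoc]
  rw [pow_three']
  simp only [Matrix.add_mul, Matrix.mul_add, smul_mul, Matrix.mul_smul, trace_add, trace_smul,
    ← Matrix.map_mul, trace_map_ofRealHom, smul_eq_mul, hYXY, hYYX, hXYX, hXXY]
  push_cast
  grind [Complex.I_sq]

end Trace

section Metric

/-- The diagonal entries of the Minkowski metric in the standard basis. -/
def minkowskiSign : Fin 4 → ℝ := ![-1, 1, 1, 1]

/-- The matrix of the Minkowski metric, used both to lower and to raise an index. -/
def minkowskiMatrix : Matrix (Fin 4) (Fin 4) ℝ := diagonal minkowskiSign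

/-- The metric induced on pairs of indices. -/
def pairMetric : Matrix (Fin 4 × Fin 4) (Fin 4 × Fin 4) ℝ := minkowskiMatrix ⊗ₖ minkowskiMatrix

lemma ηm_eq_ite (a b : Fin 4) : ηm a b = if a = b then minkowskiSign a else 0 := by
  fin_cases a <;> simp [ηm, minkowskiSign]

lemma pairMetric_eq_diagonal :
    pairMetric = diagonal fun p => minkowskiSign p.1 * minkowskiSign p.2 :=
  diagonal_kronecker_diagonal _ _

lemma up2_eq_mul (S : T2) : of (up2 S) = minkowskiMatrix * of S * minkowskiMatrix := by
  ext a b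
  simp [up2, ηm_eq_ite, minkowskiMatrix]
  ring

end Metric

section Bivector

/-- The Hodge dual `S* = ½ S^{αβ} η_{αβλρ}` of a bivector, written so that `rightDual W a b` is
definitionally `hodgeDual (W a b)`. -/
def hodgeDual (S : T2) : T2 := fun c d =>
  (1 / 2) * ∑ γ, ∑ δ, ∑ a, ∑ b, S a b * ηm a γ * ηm b δ * volc γ δ c d

lemma hodgeDual_apply (S : T2) (c d : Fin 4) :
    hodgeDual S c d
      = (1 / 2) * ∑ a, ∑ b, S a b * minkowskiSign a * minkowskiSign b * volc a b c d := by
  simp [hodgeDual, ηm_eq_ite]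

lemma volc_eq_vandermonde (a b c d : Fin 4) :
    volc a b c d = ((b : ℝ) - a) * (c - a) * (d - a) * ((c - b) * (d - b)) * (d - c) / 12 := by
  -- The rows `e_a` pick rows of the Vandermonde matrix on `0, 1, 2, 3`, of determinant 12.
  have hmul : of ![e4 a, e4 b, e4 c, e4 d] * vandermonde (fun i : Fin 4 => (i : ℝ))
      = vandermonde ![(a : ℝ), b, c, d] := by
    ext i j
    fin_cases i <;> simp [mul_apply, e4, Pi.single_apply, vandermonde_apply]
  have hdet := congrArg det hmul
  rw [det_mul, det_vandermonde, det_vandermonde] at hdet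
  have hIoi : Finset.Ioi (0 : Fin 4) = {1, 2, 3} ∧ Finset.Ioi (1 : Fin 4) = {2, 3} ∧
      Finset.Ioi (2 : Fin 4) = {3} ∧ Finset.Ioi (3 : Fin 4) = ∅ := by decide
  obtain ⟨h0, h1, h2, h3⟩ := hIoi
  simp [Fin.prod_univ_four, h0, h1, h2, h3] at hdet
  norm_num at hdet
  rw [volc, volv]
  linear_combination hdet / 12

lemma hodgeDual_antisymm (S : T2) (c d : Fin 4) : hodgeDual S c d = -hodgeDual S d c := by
  have volc_swap (a b : Fin 4) : volc a b c d = -volc a b d c := by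
    simp only [volc_eq_vandermonde]
    ring
  simp only [hodgeDual_apply, volc_swap, mul_neg, Finset.sum_neg_distrib]

lemma hodgeDual_components {S : T2} (hS : ∀ a b, S a b = -S b a) :
    hodgeDual S 0 1 = S 2 3 ∧ hodgeDual S 0 2 = -S 1 3 ∧ hodgeDual S 0 3 = S 1 2 ∧
      hodgeDual S 1 2 = -S 0 3 ∧ hodgeDual S 1 3 = S 0 2 ∧ hodgeDual S 2 3 = -S 0 1 := by
  simp only [hodgeDual_apply, Fin.sum_univ_four, volc_eq_vandermonde, minkowskiSign, hS 1 0, hS 2 0,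
    hS 3 0, hS 2 1, hS 3 1, hS 3 2]
  refine ⟨?_, ?_, ?_, ?_, ?_, ?_⟩ <;> simp <;> ring

/-- The basis of the self-dual bivectors, those `S` with `S* = -iS`, dual to the coordinates
`S₀₁, S₀₂, S₀₃`; the bivectors are the columns, their components are indexed by pairs. -/
def selfDualBasis : Matrix (Fin 4 × Fin 4) (Fin 3) ℂ :=
  of fun p i =>
    (![!![0, 1, 0, 0; -1, 0, 0, 0; 0, 0, 0, -I; 0, 0, I, 0],
      !![0, 0, 1, 0; 0, 0, 0, I; -1, 0, 0, 0; 0, -I, 0, 0],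
      !![0, 0, 0, 1; 0, 0, -I, 0; 0, I, 0, 0; -1, 0, 0, 0]] i : Matrix (Fin 4) (Fin 4) ℂ) p.1 p.2

lemma add_I_mul_hodgeDual_eq_sum {S : T2} (hS : ∀ a b, S a b = -S b a) (c d : Fin 4) :
    (S c d : ℂ) + I * hodgeDual S c d = -(1 / 2) * ∑ i,
      (∑ p : Fin 4 × Fin 4, S p.1 p.2 * (minkowskiSign p.1 * minkowskiSign p.2 : ℝ)
        * selfDualBasis p i) * selfDualBasis (c, d) i := by
  have hS0 (a) : S a a = 0 := self_eq_neg.mp (hS a a)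
  have hD := hodgeDual_antisymm S
  have hD0 (a) : hodgeDual S a a = 0 := self_eq_neg.mp (hD a a)
  simp only [Fin.sum_univ_three, Fintype.sum_prod_type, Fin.sum_univ_four, hS0, hS 1 0, hS 2 0,
    hS 3 0, hS 2 1, hS 3 1, hS 3 2, minkowskiSign]
  fin_cases c <;> fin_cases d <;>
    simp [selfDualBasis, hS0, hS 1 0, hS 2 0, hS 3 0, hS 2 1, hS 3 1, hS 3 2, hD0, hD 1 0, hD 2 0,
      hD 3 0, hD 2 1, hD 3 1, hD 3 2, hodgeDual_components hS] <;>
    grind [Complex.I_sq]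

lemma selfDualBasis_gram :
    selfDualBasisᵀ * pairMetric.map ofRealHom * selfDualBasis = (-4 : ℂ) • 1 := by
  rw [Matrix.mul_assoc, pairMetric_eq_diagonal, diagonal_map (map_zero _)]
  ext i j
  rw [mul_apply]
  simp only [diagonal_mul, transpose_apply, Fintype.sum_prod_type, Fin.sum_univ_four]
  fin_cases i <;> fin_cases j <;> simp [selfDualBasis, minkowskiSign] <;> norm_num

/-- Contraction of the second index of a pair with the vector `n`, as a matrix. -/
def contraction (n : V4) : Matrix (Fin 4) (Fin 4 × Fin 4) ℝ :=
  of fun a p => if a = p.1 then n p.2 else 0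

lemma contraction_selfDualBasis_gram (n : V4) :
    ((contraction n).map ofRealHom * selfDualBasis)ᵀ * minkowskiMatrix.map ofRealHom
      * ((contraction n).map ofRealHom * selfDualBasis) = (-η n n : ℂ) • 1 := by
  rw [Matrix.mul_assoc, minkowskiMatrix, diagonal_map (map_zero _)]
  ext i j
  rw [mul_apply]
  simp only [diagonal_mul, transpose_apply]
  simp only [mul_apply, contraction, map_apply, of_apply, Fintype.sum_prod_type,
    Fin.sum_univ_four]
  fin_cases i <;> fin_cases j <;> simp [selfDualBasis, minkowskiSign, η] <;> grind [Complex.I_sq]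

end Bivector

section SelfDualPart

/-- A double 2-form `W` which is symmetric under exchange of its two pairs, and whose dual is
symmetric as well, i.e. `*W = W*`. Among curvature tensors these are the Einstein ones; Weyl
candidates are those with vanishing scalar curvature. -/
structure IsDualSymmetric (W : T4) : Prop where
  antisymm : ∀ a b c d, W a b c d = -W a b d c
  pair_symm : ∀ a b c d, W a b c d = W c d a b
  rightDual_pair_symm : ∀ a b c d, rightDual W a b c d = rightDual W c d a b

/-- A 4-tensor as a bilinear form on pairs of indices. -/
def pairMatrix (W : T4) : Matrix (Fin 4 × Fin 4) (Fin 4 × Fin 4) ℝ :=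
  of fun p q => W p.1 p.2 q.1 q.2

/-- Twice the self-dual part of `W`, namely `W + i W*`, as a bilinear form on pairs of indices. -/
def selfDualPart (W : T4) : Matrix (Fin 4 × Fin 4) (Fin 4 × Fin 4) ℂ :=
  (pairMatrix W).map ofRealHom + I • (pairMatrix (rightDual W)).map ofRealHom

/-- The matrix of the self-dual part of `W` in the basis `selfDualBasis`. -/
def selfDualMatrix (W : T4) : Matrix (Fin 3) (Fin 3) ℂ :=
  (1 / 8 : ℂ) • (selfDualBasisᵀ * pairMetric.map ofRealHom * (pairMatrix W).map ofRealHom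
    * pairMetric.map ofRealHom * selfDualBasis)

lemma transpose_pairMetric : pairMetricᵀ = pairMetric := by
  rw [pairMetric_eq_diagonal, diagonal_transpose]

variable {W : T4}

lemma selfDualPart_eq_mul_selfDualBasis (hW : ∀ a b c d, W a b c d = -W a b d c) :
    selfDualPart W = -(1 / 2 : ℂ) • ((pairMatrix W).map ofRealHom * pairMetric.map ofRealHom
      * selfDualBasis * selfDualBasisᵀ) := by
  ext ⟨a, b⟩ ⟨c, d⟩
  rw [pairMetric_eq_diagonal, diagonal_map (map_zero _), Matrix.smul_apply, mul_apply]
  simp only [mul_apply (N := selfDualBasis), mul_diagonal]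
  exact add_I_mul_hodgeDual_eq_sum (hW a b) c d

namespace IsDualSymmetric

lemma transpose_pairMatrix (hW : IsDualSymmetric W) : (pairMatrix W)ᵀ = pairMatrix W := by
  ext p q
  exact hW.pair_symm _ _ _ _

lemma transpose_pairMatrix_rightDual (hW : IsDualSymmetric W) :
    (pairMatrix (rightDual W))ᵀ = pairMatrix (rightDual W) := by
  ext p q
  exact hW.rightDual_pair_symm _ _ _ _

lemma transpose_selfDualPart (hW : IsDualSymmetric W) : (selfDualPart W)ᵀ = selfDualPart W := by
  rw [selfDualPart, transpose_add, transpose_smul, ← transpose_map, ← transpose_map,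
    hW.transpose_pairMatrix, hW.transpose_pairMatrix_rightDual]

lemma selfDualPart_mul_selfDualBasis (hW : IsDualSymmetric W) :
    selfDualPart W * pairMetric.map ofRealHom * selfDualBasis
      = (2 : ℂ) • ((pairMatrix W).map ofRealHom * pairMetric.map ofRealHom * selfDualBasis) := by
  rw [selfDualPart_eq_mul_selfDualBasis hW.antisymm, smul_mul, smul_mul, Matrix.mul_assoc,
    Matrix.mul_assoc, ← Matrix.mul_assoc selfDualBasisᵀ, selfDualBasis_gram, Matrix.mul_smul,
    Matrix.mul_one, smul_smul]
  norm_num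

lemma selfDualPart_eq (hW : IsDualSymmetric W) :
    selfDualPart W = selfDualBasis * selfDualMatrix W * selfDualBasisᵀ := by
  set K := pairMetric.map ofRealHom
  set L := (pairMatrix W).map ofRealHom
  set M := selfDualBasis
  have hL : Lᵀ = L := by rw [← transpose_map, hW.transpose_pairMatrix]
  have hK : Kᵀ = K := by rw [← transpose_map, transpose_pairMetric]
  have hZ : selfDualPart W = -(1 / 2 : ℂ) • (L * K * M * Mᵀ) :=
    selfDualPart_eq_mul_selfDualBasis hW.antisymm
  have hZ_left : selfDualPart W = -(1 / 2 : ℂ) • (M * Mᵀ * K * L) := by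
    rw [← hW.transpose_selfDualPart, hZ]
    simp only [transpose_smul, transpose_mul, transpose_transpose, hL, hK, Matrix.mul_assoc]
  have hLKM : L * K * M = (-2 : ℂ) • (M * selfDualMatrix W) := by
    have h2 : (2 : ℂ) • (L * K * M) = (-4 : ℂ) • (M * selfDualMatrix W) := by
      rw [← hW.selfDualPart_mul_selfDualBasis, hZ_left, selfDualMatrix]
      simp only [smul_mul, Matrix.mul_smul, smul_smul, Matrix.mul_assoc, K, L, M]
      norm_num
    calc L * K * M = (1 / 2 : ℂ) • ((2 : ℂ) • (L * K * M)) := by rw [smul_smul]; norm_num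
      _ = (-2 : ℂ) • (M * selfDualMatrix W) := by rw [h2, smul_smul]; norm_num
  rw [hZ, hLKM, smul_mul, smul_smul]
  norm_num

lemma selfDualPart_sq (hW : IsDualSymmetric W) :
    selfDualPart W * pairMetric.map ofRealHom * selfDualPart W
      = (2 : ℂ) • ((pairMatrix W).map ofRealHom * pairMetric.map ofRealHom * selfDualPart W) := by
  nth_rewrite 2 [hW.selfDualPart_eq]
  rw [← Matrix.mul_assoc, ← Matrix.mul_assoc, hW.selfDualPart_mul_selfDualBasis, smul_mul, smul_mul,
    Matrix.mul_assoc _ selfDualBasis, Matrix.mul_assoc _ (selfDualBasis * _), ← hW.selfDualPart_eq]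

end IsDualSymmetric

end SelfDualPart

section IndexNotation

lemma sum_upFirst2_eq_trace (X Y Z : T4) :
    ∑ μ, ∑ ν, ∑ lam, ∑ ρ, ∑ σ, ∑ π,
        upFirst2 X μ ν lam ρ * upFirst2 Y σ π μ ν * upFirst2 Z lam ρ σ π
      = (pairMetric * pairMatrix Y * (pairMetric * pairMatrix X)
          * (pairMetric * pairMatrix Z)).trace := by
  have upFirst2_eq (W : T4) (a b c d : Fin 4) :
      upFirst2 W a b c d = (pairMetric * pairMatrix W) (a, b) (c, d) := by
    simp [upFirst2, ηm_eq_ite, pairMetric_eq_diagonal, pairMatrix]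
  rw [← trace_mul_cycle]
  simp only [upFirst2_eq, trace_mul_mul_eq_sum, Fintype.sum_prod_type, mul_right_comm]

lemma minkowskiMatrix_mul_transpose_apply (Y : T2) (a b : Fin 4) :
    (minkowskiMatrix * (of Y)ᵀ) a b = ∑ c, ηm a c * Y b c := by
  simp [ηm_eq_ite, minkowskiMatrix]

lemma sum_mul_sum_mul_up2_eq_trace (X Y Z : T2) :
    ∑ ν, ∑ lam, X ν lam * ∑ μ, (∑ l', ηm lam l' * Y μ l') * up2 Z μ ν
      = (minkowskiMatrix * of X * (minkowskiMatrix * (of Y)ᵀ)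
          * (minkowskiMatrix * of Z)).trace := by
  have hcycle : (minkowskiMatrix * of X * (minkowskiMatrix * (of Y)ᵀ)
      * (minkowskiMatrix * of Z)).trace
        = (of X * (minkowskiMatrix * (of Y)ᵀ) * of (up2 Z)).trace := by
    rw [up2_eq_mul, Matrix.mul_assoc, Matrix.mul_assoc, trace_mul_comm]
    simp only [Matrix.mul_assoc]
  rw [hcycle, trace_mul_mul_eq_sum]
  simp only [minkowskiMatrix_mul_transpose_apply, of_apply, Finset.mul_sum, Finset.sum_mul,
    mul_assoc]

lemma sum_up2_mul_sum_mul_eq_trace (X Y Z : T2) :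
    ∑ μ, ∑ ν, up2 X μ ν * ∑ lam, (∑ l', ηm lam l' * Y μ l') * Z ν lam
      = (minkowskiMatrix * of X * (minkowskiMatrix * of Z)
          * (minkowskiMatrix * (of Y)ᵀ)).trace := by
  rw [← Matrix.mul_assoc _ minkowskiMatrix (of Z), ← up2_eq_mul, trace_mul_mul_eq_sum]
  simp only [minkowskiMatrix_mul_transpose_apply, of_apply, Finset.mul_sum, mul_comm,
    mul_left_comm]

end IndexNotation

section ElectricMagnetic

lemma epart_eq_mul (W : T4) (n : V4) :
    of (Epart W n) = contraction n * pairMatrix W * (contraction n)ᵀ := by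
  rw [Matrix.mul_assoc]
  ext a b
  simp [Epart, eval4, e4, contraction, pairMatrix, mul_apply, Fintype.sum_prod_type,
    Pi.single_apply, Finset.mul_sum, mul_comm, mul_left_comm]

variable {W : T4}

namespace IsDualSymmetric

lemma transpose_epart (hW : IsDualSymmetric W) (n : V4) : (of (Epart W n))ᵀ = of (Epart W n) := by
  simp only [epart_eq_mul, transpose_mul, transpose_transpose, hW.transpose_pairMatrix,
    Matrix.mul_assoc]

lemma transpose_bpart (hW : IsDualSymmetric W) (n : V4) : (of (Bpart W n))ᵀ = of (Bpart W n) := by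
  change (of (Epart (rightDual W) n))ᵀ = of (Epart (rightDual W) n)
  simp only [epart_eq_mul, transpose_mul, transpose_transpose, hW.transpose_pairMatrix_rightDual,
    Matrix.mul_assoc]

lemma epart_add_I_smul_bpart (hW : IsDualSymmetric W) (n : V4) :
    (of (Epart W n)).map ofRealHom + I • (of (Bpart W n)).map ofRealHom
      = ((contraction n).map ofRealHom * selfDualBasis) * selfDualMatrix W
        * ((contraction n).map ofRealHom * selfDualBasis)ᵀ := by
  change (of (Epart W n)).map ofRealHom + I • (of (Epart (rightDual W) n)).map ofRealHom = _
  calc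
    _ = (contraction n).map ofRealHom * selfDualPart W * ((contraction n).map ofRealHom)ᵀ := by
      simp only [epart_eq_mul, Matrix.map_mul, selfDualPart, Matrix.mul_add, Matrix.add_mul,
        Matrix.mul_smul, smul_mul, transpose_map]
    _ = _ := by
      rw [hW.selfDualPart_eq, transpose_mul]
      simp only [Matrix.mul_assoc]

lemma trace_pow_three_epart_add_I_smul_bpart (hW : IsDualSymmetric W) (n : V4) :
    (((minkowskiMatrix * of (Epart W n)).map ofRealHom
        + I • (minkowskiMatrix * of (Bpart W n)).map ofRealHom) ^ 3).trace
      = (-η n n : ℂ) ^ 3 * (selfDualMatrix W ^ 3).trace := by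
  rw [Matrix.map_mul, Matrix.map_mul, ← Matrix.mul_smul, ← Matrix.mul_add,
    hW.epart_add_I_smul_bpart, ← Matrix.mul_assoc, ← Matrix.mul_assoc]
  apply trace_mul_mul_pow_succ
  rw [← Matrix.mul_assoc, contraction_selfDualBasis_gram]

lemma pow_three_pairMetric_mul_selfDualPart (hW : IsDualSymmetric W) :
    (pairMetric.map ofRealHom * selfDualPart W) ^ 3
      = (4 : ℂ) • ((pairMetric * pairMatrix W * (pairMetric * pairMatrix W)).map ofRealHom
        * (pairMetric.map ofRealHom * selfDualPart W)) := by
  simp only [Matrix.map_mul]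
  set K := pairMetric.map ofRealHom
  set L := (pairMatrix W).map ofRealHom
  set Z := selfDualPart W
  have hsq : Z * K * Z = (2 : ℂ) • (L * K * Z) := hW.selfDualPart_sq
  calc (K * Z) ^ 3 = K * (Z * K * Z) * K * Z := by simp only [pow_three', Matrix.mul_assoc]
    _ = (2 : ℂ) • (K * L * K * Z * K * Z) := by
      simp only [hsq, smul_mul, Matrix.mul_smul, Matrix.mul_assoc]
    _ = (2 : ℂ) • (K * L * K * (Z * K * Z)) := by simp only [Matrix.mul_assoc]
    _ = (4 : ℂ) • (K * L * (K * L) * (K * Z)) := by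
      rw [hsq, Matrix.mul_smul, smul_smul]
      norm_num [Matrix.mul_assoc]

lemma trace_add_I_mul_trace_rightDual (hW : IsDualSymmetric W) :
    ((pairMetric * pairMatrix W * (pairMetric * pairMatrix W)
        * (pairMetric * pairMatrix W)).trace : ℂ)
      + I * (pairMetric * pairMatrix W * (pairMetric * pairMatrix W)
        * (pairMetric * pairMatrix (rightDual W))).trace = -16 * (selfDualMatrix W ^ 3).trace := by
  have hcube : ((pairMetric.map ofRealHom * selfDualPart W) ^ 3).trace
      = (-4) ^ 3 * (selfDualMatrix W ^ 3).trace := by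
    rw [hW.selfDualPart_eq, ← Matrix.mul_assoc, ← Matrix.mul_assoc]
    apply trace_mul_mul_pow_succ
    rw [← Matrix.mul_assoc, selfDualBasis_gram]
  rw [hW.pow_three_pairMetric_mul_selfDualPart, trace_smul, selfDualPart, Matrix.mul_add,
    Matrix.mul_smul, ← Matrix.map_mul, ← Matrix.map_mul, Matrix.mul_add, Matrix.mul_smul,
    ← Matrix.map_mul, ← Matrix.map_mul, trace_add, trace_smul, trace_map_ofRealHom,
    trace_map_ofRealHom, smul_eq_mul, smul_eq_mul] at hcube
  linear_combination hcube / 4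

lemma trace_eq_trace_epart_bpart (hW : IsDualSymmetric W) (n : V4) :
    let A := pairMetric * pairMatrix W
    let E := minkowskiMatrix * of (Epart W n)
    let B := minkowskiMatrix * of (Bpart W n)
    (-η n n) ^ 3 / 16 * (A * A * A).trace = 3 * (E * B * B).trace - (E * E * E).trace ∧
      (-η n n) ^ 3 / 16 * (A * A * (pairMetric * pairMatrix (rightDual W))).trace
        = (B * B * B).trace - 3 * (B * E * E).trace := by
  intro A E B
  have hA := hW.trace_add_I_mul_trace_rightDual
  have hEB := hW.trace_pow_three_epart_add_I_smul_bpart n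
  rw [trace_add_I_smul_pow_three] at hEB
  have key : (((-η n n) ^ 3 / 16 * (A * A * A).trace : ℝ) : ℂ)
      + I * ((-η n n) ^ 3 / 16 * (A * A * (pairMetric * pairMatrix (rightDual W))).trace : ℝ)
      = (3 * (E * B * B).trace - (E * E * E).trace : ℝ)
        + I * ((B * B * B).trace - 3 * (B * E * E).trace : ℝ) := by
    push_cast at hEB ⊢
    linear_combination (-η n n : ℂ) ^ 3 / 16 * hA + hEB
  constructor
  · simpa only [Complex.add_re, Complex.I_mul_re, Complex.ofReal_re, Complex.ofReal_im, neg_zero,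
      add_zero] using congrArg Complex.re key
  · simpa only [Complex.add_im, Complex.I_mul_im, Complex.ofReal_re, Complex.ofReal_im,
      zero_add] using congrArg Complex.im key

end IsDualSymmetric

end ElectricMagnetic

section Weyl

lemma eval4_e4 (W : T4) (a b c d : Fin 4) : eval4 W (e4 a) (e4 b) (e4 c) (e4 d) = W a b c d := by
  simp [eval4, e4, Pi.single_apply]

namespace IsWeyl

variable {W : T4}

lemma antisymm_left (hW : IsWeyl W) (a b c d : Fin 4) : W a b c d = -W b a c d := by
  simpa only [eval4_e4] using hW.1 (e4 a) (e4 b) (e4 c) (e4 d)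

lemma antisymm_right (hW : IsWeyl W) (a b c d : Fin 4) : W a b c d = -W a b d c := by
  simpa only [eval4_e4] using hW.2.1 (e4 a) (e4 b) (e4 c) (e4 d)

lemma pair_symm (hW : IsWeyl W) (a b c d : Fin 4) : W a b c d = W c d a b := by
  simpa only [eval4_e4] using hW.2.2.1 (e4 a) (e4 b) (e4 c) (e4 d)

lemma trace_free (hW : IsWeyl W) (b d : Fin 4) :
    -W 0 b 0 d + W 1 b 1 d + W 2 b 2 d + W 3 b 3 d = 0 := by
  simpa [eval4_e4, ηm_eq_ite, minkowskiSign, Fin.sum_univ_four] using hW.2.2.2.2 (e4 b) (e4 d)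

lemma rightDual_pair_symm_of_lt (hW : IsWeyl W) {a b c d : Fin 4} (hab : a < b) (hcd : c < d) :
    rightDual W a b c d = rightDual W c d a b := by
  -- The components of `*W - W*` are combinations of those of the trace of `W`.
  have hdual (a b) : rightDual W a b 0 1 = W a b 2 3 ∧ rightDual W a b 0 2 = -W a b 1 3 ∧
      rightDual W a b 0 3 = W a b 1 2 ∧ rightDual W a b 1 2 = -W a b 0 3 ∧
      rightDual W a b 1 3 = W a b 0 2 ∧ rightDual W a b 2 3 = -W a b 0 1 :=
    hodgeDual_components (hW.antisymm_right a b)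
  have hl := hW.antisymm_left
  have hr := hW.antisymm_right
  have hx := hW.pair_symm
  have ht := hW.trace_free
  fin_cases a <;> fin_cases b <;> first | exact absurd hab (by decide) | skip
  all_goals
    fin_cases c <;> fin_cases d <;> first | exact absurd hcd (by decide) | skip
    all_goals clear hab hcd; simp [hdual]; try grind

lemma isDualSymmetric (hW : IsWeyl W) : IsDualSymmetric W where
  antisymm := hW.antisymm_right
  pair_symm := hW.pair_symm
  rightDual_pair_symm a b c d := by
    have hl (a b c d) : rightDual W a b c d = -rightDual W b a c d := by
      have hrow : W a b = -W b a := funext₂ (hW.antisymm_left a b)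
      change hodgeDual (W a b) c d = -hodgeDual (W b a) c d
      simp [hodgeDual_apply, hrow]
    have hr (a b c d) : rightDual W a b c d = -rightDual W a b d c := hodgeDual_antisymm (W a b) c d
    have hlt (a b c d) := hW.rightDual_pair_symm_of_lt (a := a) (b := b) (c := c) (d := d)
    rcases lt_trichotomy a b with h | rfl | h <;> rcases lt_trichotomy c d with h' | rfl | h' <;>
      grind

end IsWeyl

end Weyl

theorem stmt_4_general {C : T4} (hC : IsDualSymmetric C) (n : V4) :
    (-η n n) ^ 3 / 16 * (∑ μ, ∑ ν, ∑ lam, ∑ ρ, ∑ σ, ∑ π,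
        upFirst2 C μ ν lam ρ * upFirst2 C σ π μ ν * upFirst2 C lam ρ σ π)
      = ∑ ν, ∑ lam, Epart C n ν lam *
          (3 * (∑ μ, (∑ l', ηm lam l' * Bpart C n μ l') * up2 (Bpart C n) μ ν)
            - ∑ μ, (∑ l', ηm lam l' * Epart C n μ l') * up2 (Epart C n) μ ν) ∧
    (-η n n) ^ 3 / 16 * (∑ μ, ∑ ν, ∑ lam, ∑ ρ, ∑ σ, ∑ π,
        upFirst2 C μ ν lam ρ * upFirst2 C σ π μ ν * upFirst2 (rightDual C) lam ρ σ π)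
      = ∑ μ, ∑ ν, up2 (Bpart C n) μ ν *
          ((∑ lam, (∑ l', ηm lam l' * Bpart C n μ l') * Bpart C n ν lam)
            - 3 * ∑ lam, (∑ l', ηm lam l' * Epart C n μ l') * Epart C n ν lam) := by
  obtain ⟨hre, him⟩ := hC.trace_eq_trace_epart_bpart n
  constructor
  · simp only [mul_sub, Finset.sum_sub_distrib, mul_left_comm _ (3 : ℝ), ← Finset.mul_sum]
    rw [sum_upFirst2_eq_trace, sum_mul_sum_mul_up2_eq_trace, sum_mul_sum_mul_up2_eq_trace,
      hC.transpose_epart, hC.transpose_bpart, hre]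
  · simp only [mul_sub, Finset.sum_sub_distrib, mul_left_comm _ (3 : ℝ), ← Finset.mul_sum]
    rw [sum_upFirst2_eq_trace, sum_up2_mul_sum_mul_eq_trace, sum_up2_mul_sum_mul_eq_trace,
      hC.transpose_epart, hC.transpose_bpart, him]

/-- the cubic Weyl scalars split as
`(1/16) C^{μν}{}_{λρ} C^{σπ}{}_{μν} C^{λρ}{}_{σπ} = E_{νλ}(3B_μ{}^λ B^{μν} − E_μ{}^λ E^{μν})` and
`(1/16) C^{μν}{}_{λρ} C^{σπ}{}_{μν} (C*)^{λρ}{}_{σπ} = B^{μν}(B_μ{}^λ B_{νλ} − 3E_μ{}^λ E_{νλ})`. -/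
theorem stmt_4 (C : T4) (hC : IsWeyl C) (n : V4) (hn : η n n = -1)
    (E B : T2) (hE : E = Epart C n) (hB : B = Bpart C n) :
    (1/16) * (∑ μ : Fin 4, ∑ ν : Fin 4, ∑ lam : Fin 4, ∑ ρ : Fin 4,
        ∑ σ : Fin 4, ∑ π : Fin 4,
          upFirst2 C μ ν lam ρ * upFirst2 C σ π μ ν * upFirst2 C lam ρ σ π)
      = ∑ ν : Fin 4, ∑ lam : Fin 4, E ν lam *
          (3 * (∑ μ : Fin 4, (∑ l' : Fin 4, ηm lam l' * B μ l') * up2 B μ ν)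
            - (∑ μ : Fin 4, (∑ l' : Fin 4, ηm lam l' * E μ l') * up2 E μ ν)) ∧
    (1/16) * (∑ μ : Fin 4, ∑ ν : Fin 4, ∑ lam : Fin 4, ∑ ρ : Fin 4,
        ∑ σ : Fin 4, ∑ π : Fin 4,
          upFirst2 C μ ν lam ρ * upFirst2 C σ π μ ν * upFirst2 (rightDual C) lam ρ σ π)
      = ∑ μ : Fin 4, ∑ ν : Fin 4, up2 B μ ν *
          ((∑ lam : Fin 4, (∑ l' : Fin 4, ηm lam l' * B μ l') * B ν lam)
            - 3 * (∑ lam : Fin 4, (∑ l' : Fin 4, ηm lam l' * E μ l') * E ν lam)) := by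
  subst hE hB
  simpa only [hn, neg_neg, one_pow] using stmt_4_general hC.isDualSymmetric n
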